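/- Consider the following conditions on a geodesic ray ⟨g_i⟩ in F₂. Condition (1): ⟨g_i⟩ is not tail equivalent to any of the four geodesic rays ⟨e, h, h², …⟩, ⟨e, h⁻¹, h⁻², …⟩, ⟨e, v, v², …⟩, ⟨e, v⁻¹, v⁻², …⟩. Condition (2): ⟨g_i⟩ is not tail equivalent to either of the sequences ⟨e, h, v⁻¹h, hv⁻¹h, v⁻¹hv⁻¹h, …⟩ and ⟨e, h⁻¹, vh⁻¹, h⁻¹vh⁻¹, vh⁻¹vh⁻¹, …⟩. Then: for λ > 2, a geodesic ray is a λ-shrinking sequence of some θ ∈ S¹ if and only if it satisfies condition (1); for λ = 2, a geodesic ray is a 2-shrinking sequence of some θ ∈ S¹ if and only if it satisfies conditions (1) and (2). -/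

import Mathlib

noncomputable section

abbrev F2 := FreeGroup Bool

def gh : F2 := FreeGroup.of true
def gv : F2 := FreeGroup.of false

def hmat (l : ℝ) : Matrix.SpecialLinearGroup (Fin 2) ℝ :=
  ⟨!![1, l; 0, 1], by norm_num [Matrix.det_fin_two_of]⟩

def vmat (l : ℝ) : Matrix.SpecialLinearGroup (Fin 2) ℝ :=
  ⟨!![1, 0; l, 1], by norm_num [Matrix.det_fin_two_of]⟩

def rho (l : ℝ) : F2 →* Matrix.SpecialLinearGroup (Fin 2) ℝ :=
  FreeGroup.lift fun b => if b then hmat l else vmat l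

def act (l : ℝ) (g : F2) (x : Fin 2 → ℝ) : Fin 2 → ℝ :=
  (rho l g).val.mulVec x

def nrm (x : Fin 2 → ℝ) : ℝ := Real.sqrt (x 0 ^ 2 + x 1 ^ 2)

def Circ : Set (Fin 2 → ℝ) := {x | nrm x = 1}

def gens : Set F2 := {gh, gv, gh⁻¹, gv⁻¹}

def ShrinkSet (l : ℝ) (g : F2) : Set (Fin 2 → ℝ) :=
  {x | x ∈ Circ ∧ nrm (act l g x) < 1}

def ExpSet (l : ℝ) (g : F2) : Set (Fin 2 → ℝ) :=
  {x | x ∈ Circ ∧ 1 < nrm (act l g x)}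

def IsGeodesicRay (g : ℕ → F2) : Prop :=
  g 0 = 1 ∧ (∀ n, g (n + 1) * (g n)⁻¹ ∈ gens) ∧ ∀ n, g (n + 2) * (g n)⁻¹ ≠ 1

def IsGeodesicSegment (g : ℕ → F2) (N : ℕ) : Prop :=
  g 0 = 1 ∧ (∀ n, n + 1 ≤ N → g (n + 1) * (g n)⁻¹ ∈ gens) ∧
    ∀ n, n + 2 ≤ N → g (n + 2) * (g n)⁻¹ ≠ 1

def IsShrinkingSeq (l : ℝ) (g : ℕ → F2) (θ : Fin 2 → ℝ) : Prop :=
  ∀ ε : ℝ, 0 < ε → ∃ i : ℕ, nrm (act l (g i) θ) < ε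

def Shrinkable (l : ℝ) (θ : Fin 2 → ℝ) : Prop :=
  ∀ ε : ℝ, 0 < ε → ∃ g : F2, nrm (act l g θ) < ε

def Renormalizable (l : ℝ) (θ : Fin 2 → ℝ) : Prop :=
  Shrinkable l θ ∧ ∀ k : F2, ∀ c : ℝ, act l (k * (gh * gv⁻¹) * k⁻¹) θ ≠ c • θ

abbrev SP := Bool × Bool

def Quad (s : SP) : Set (Fin 2 → ℝ) :=
  {x | (if s.1 then 0 < x 0 else x 0 < 0) ∧ (if s.2 then 0 < x 1 else x 1 < 0)}

def letterSigma : Bool × Bool → SP → SP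
  | (true, true), s => (s.2, s.2)
  | (false, true), s => (s.1, s.1)
  | (true, false), s => (!s.2, s.2)
  | (false, false), s => (s.1, !s.1)

def SigmaAct (g : F2) : SP → SP :=
  (FreeGroup.toWord g).foldr (fun w acc => letterSigma w ∘ acc) id

def gammaAut : F2 →* F2 := FreeGroup.lift fun b => if b then gv⁻¹ else gh⁻¹

def rPerm (s : SP) : SP := (!s.2, s.1)

def rPermInv (s : SP) : SP := (s.2, !s.1)

def shiftRay (g : ℕ → F2) : ℕ → F2 := fun n => g (n + 1) * (g 1)⁻¹

def TailEquiv (g g' : ℕ → F2) : Prop :=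
  ∃ m n : ℕ, shiftRay^[m] g = shiftRay^[n] g'

def seqPow (a : F2) : ℕ → F2 := fun n => a ^ n

def seqPer (a b : F2) : ℕ → F2 := fun n =>
  if n % 2 = 0 then (b * a) ^ (n / 2) else a * (b * a) ^ (n / 2)

def Cond1 (g : ℕ → F2) : Prop :=
  ¬ TailEquiv g (seqPow gh) ∧ ¬ TailEquiv g (seqPow gh⁻¹) ∧
    ¬ TailEquiv g (seqPow gv) ∧ ¬ TailEquiv g (seqPow gv⁻¹)

def Cond2 (g : ℕ → F2) : Prop :=
  ¬ TailEquiv g (seqPer gh gv⁻¹) ∧ ¬ TailEquiv g (seqPer gh⁻¹ gv)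

def adjSum {V : Type} (G : SimpleGraph V) (f : V → ℝ) (v : V) : ℝ :=
  ∑ᶠ w ∈ G.neighborSet v, f w

def BoundedValance {V : Type} (G : SimpleGraph V) : Prop :=
  ∃ D : ℕ, ∀ v, (G.neighborSet v).Finite ∧ (G.neighborSet v).ncard ≤ D

def BipartWith {V : Type} (G : SimpleGraph V) (A : Set V) : Prop :=
  ∀ v w, G.Adj v w → (v ∈ A ↔ w ∉ A)

def Hop {V : Type} (G : SimpleGraph V) (A : Set V) (k : ℤ) (f : V → ℝ) : V → ℝ :=
  fun v => f v + (k : ℝ) * Set.indicator A (adjSum G f) v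

def Vop {V : Type} (G : SimpleGraph V) (A : Set V) (k : ℤ) (f : V → ℝ) : V → ℝ :=
  fun v => f v + (k : ℝ) * Set.indicator Aᶜ (adjSum G f) v

def QuadV {V : Type} (A : Set V) (s : SP) : Set (V → ℝ) :=
  {f | (∀ v ∈ A, f v = 0 ∨ (if s.1 then 0 < f v else f v < 0)) ∧
       ∀ v, v ∉ A → f v = 0 ∨ (if s.2 then 0 < f v else f v < 0)}

def valance {V : Type} (G : SimpleGraph V) (v : V) : ℕ := (G.neighborSet v).ncard

def evec {V : Type} (v : V) : V → ℝ := Set.indicator {v} 1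

def InSpoke {V : Type} (G : SimpleGraph V) (x : V) : Prop :=
  ∃ k : ℕ, 2 ≤ k ∧ ∃ c : ℕ → V,
    (∀ i j, 1 ≤ i → i ≤ k → 1 ≤ j → j ≤ k → c i = c j → i = j) ∧
    valance G (c 1) = 1 ∧
    (∀ i, 2 ≤ i → i ≤ k - 1 →
      valance G (c i) = 2 ∧ G.Adj (c i) (c (i - 1)) ∧ G.Adj (c i) (c (i + 1))) ∧
    ∃ i, 1 ≤ i ∧ i ≤ k ∧ x = c i

/-!
Assign to each letter `c = k^σ`, with `k ∈ {h, v}` and `σ = ±1`, the quadratic form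
`q_c x = x_j ^ 2 + σ * x₀ * x₁`, where `x_j` is the coordinate fixed by `k`. Then
`‖c x‖² = ‖x‖² + 2λ q_c x + λ(λ - 2) x_j²`, and `q_c + q_d ≥ 0` for distinct letters `c` and `d`,
so that for `λ ≥ 2` the four cones `q_c ≤ 0` satisfy the ping-pong relations.

If `⟨g_n⟩` has letters `a_n`, compactness therefore gives a unit vector `x` with
`q_{a_n} (g_n x) ≤ 0` for all `n`, and `‖g_n x‖` is non-increasing. For `λ > 2` it drops by a
definite factor whenever the axis of the letter changes. For `λ = 2` it drops by a definite factor
at each change of axis that keeps the sign or follows a repeated letter; if this happens only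
finitely often, the letters are eventually constant or eventually alternate as in
`h, v⁻¹, h, v⁻¹, …` or `h⁻¹, v, h⁻¹, v, …`.

Conversely, along each excluded ray some nonzero vector `w` keeps constant norm. As the area
spanned by `w` and `x` is preserved, no vector `x ≠ 0` can be shrunk along such a ray.
-/

open Filter Topology

variable {l : ℝ} {x y : Fin 2 → ℝ} {g : ℕ → F2} {a : ℕ → Bool × Bool} {c d : Bool × Bool}

/-! ### The Euclidean norm and the action -/

theorem nrm_eq_norm (x : Fin 2 → ℝ) : nrm x = ‖WithLp.toLp 2 x‖ := by
  simp [nrm, EuclideanSpace.norm_eq]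

theorem nrm_sq (x : Fin 2 → ℝ) : nrm x ^ 2 = x 0 ^ 2 + x 1 ^ 2 :=
  Real.sq_sqrt (by positivity)

theorem nrm_nonneg (x : Fin 2 → ℝ) : 0 ≤ nrm x :=
  Real.sqrt_nonneg _

theorem nrm_pos_iff : 0 < nrm x ↔ x ≠ 0 := by
  simp [nrm_eq_norm]

theorem nrm_smul (r : ℝ) (x : Fin 2 → ℝ) : nrm (r • x) = |r| * nrm x := by
  simp [nrm_eq_norm, norm_smul]

theorem ne_zero_of_mem_circ (hx : x ∈ Circ) : x ≠ 0 :=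
  nrm_pos_iff.1 (one_pos.trans_eq (Eq.symm hx))

theorem inv_nrm_smul_mem_circ (hx : x ≠ 0) : (nrm x)⁻¹ • x ∈ Circ := by
  have hpos := nrm_pos_iff.2 hx
  change nrm _ = 1
  rw [nrm_smul, abs_of_pos (inv_pos.2 hpos), inv_mul_cancel₀ hpos.ne']

theorem isCompact_circ : IsCompact Circ := by
  have hpre : Circ = (EuclideanSpace.equiv (Fin 2) ℝ).symm ⁻¹' Metric.sphere 0 1 := by
    ext x
    simp [Circ, nrm_eq_norm]
  rw [hpre]
  exact (EuclideanSpace.equiv (Fin 2) ℝ).symm.toHomeomorph.isClosedEmbedding.isCompact_preimage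
    (isCompact_sphere 0 1)

theorem act_one (l : ℝ) (x : Fin 2 → ℝ) : act l 1 x = x := by
  simp [act]

theorem act_mul (l : ℝ) (p q : F2) (x : Fin 2 → ℝ) : act l (p * q) x = act l p (act l q x) := by
  rw [act, act, act, map_mul, Matrix.SpecialLinearGroup.coe_mul, Matrix.mulVec_mulVec]

theorem act_smul (l : ℝ) (p : F2) (r : ℝ) (x : Fin 2 → ℝ) :
    act l p (r • x) = r • act l p x :=
  Matrix.mulVec_smul ..

theorem act_ne_zero (l : ℝ) (p : F2) (hx : x ≠ 0) : act l p x ≠ 0 := by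
  intro hzero
  apply hx
  rw [← act_one l x, ← inv_mul_cancel p, act_mul, hzero]
  exact Matrix.mulVec_zero _

theorem continuous_act (l : ℝ) (p : F2) : Continuous (act l p) :=
  Continuous.matrix_mulVec continuous_const continuous_id

/-- The signed area of the parallelogram spanned by `x` and `y`, the invariant of the action which
obstructs shrinking. -/
def area (x y : Fin 2 → ℝ) : ℝ := x 0 * y 1 - x 1 * y 0

theorem area_act (l : ℝ) (p : F2) (x y : Fin 2 → ℝ) :
    area (act l p x) (act l p y) = area x y := by
  have hdet := (rho l p).det_coe
  rw [Matrix.det_fin_two] at hdet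
  simp only [area, act, Matrix.mulVec, dotProduct, Fin.sum_univ_two]
  linear_combination (x 0 * y 1 - x 1 * y 0) * hdet

theorem abs_area_le (x y : Fin 2 → ℝ) : |area x y| ≤ nrm x * nrm y := by
  refine abs_le_of_sq_le_sq ?_ (mul_nonneg (nrm_nonneg x) (nrm_nonneg y))
  rw [mul_pow, nrm_sq, nrm_sq, area]
  linarith [sq_nonneg (x 0 * y 0 + x 1 * y 1)]

theorem exists_eq_smul_of_area_eq_zero (hy : y ≠ 0) (h : area x y = 0) : ∃ r : ℝ, x = r • y := by
  have hnorm : y 0 ^ 2 + y 1 ^ 2 ≠ 0 := nrm_sq y ▸ (pow_pos (nrm_pos_iff.2 hy) 2).ne'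
  refine ⟨(x 0 * y 0 + x 1 * y 1) / (y 0 ^ 2 + y 1 ^ 2), ?_⟩
  rw [area] at h
  ext i
  fin_cases i <;> simp <;> field_simp
  · linear_combination y 1 * h
  · linear_combination -y 0 * h

/-! ### Letters and their cones -/

/-- The generator `h`, `h⁻¹`, `v` or `v⁻¹` encoded by a letter of `FreeGroup Bool`: the first
component is the axis (`true` for `h`), the second the sign of the exponent. -/
def letter (c : Bool × Bool) : F2 := FreeGroup.mk [c]

/-- The letter of the inverse generator. -/
def invLetter (c : Bool × Bool) : Bool × Bool := (c.1, !c.2)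

/-- The letter with both axis and sign changed; iterating it spells the two sequences excluded by
`Cond2`. -/
def alternateLetter (c : Bool × Bool) : Bool × Bool := (!c.1, !c.2)

/-- The exponent `±1` of a letter. -/
def letterSign (c : Bool × Bool) : ℝ := if c.2 then 1 else -1

/-- The index of the coordinate that the shear of a letter leaves fixed. -/
def fixedCoord (c : Bool × Bool) : Fin 2 := if c.1 then 1 else 0

/-- The quadratic form which, at `λ = 2`, is a quarter of the increase of the squared norm under the
letter `c`. The cones `coneForm c ≤ 0` are the ping-pong regions. -/
def coneForm (c : Bool × Bool) (x : Fin 2 → ℝ) : ℝ :=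
  x (fixedCoord c) ^ 2 + letterSign c * (x 0 * x 1)

theorem letter_invLetter (c : Bool × Bool) : letter (invLetter c) = (letter c)⁻¹ := rfl

theorem invLetter_invLetter (c : Bool × Bool) : invLetter (invLetter c) = c := by
  simp [invLetter]

theorem involutive_alternateLetter : Function.Involutive alternateLetter := by
  simp [Function.Involutive, alternateLetter]

theorem axis_ne_of_ne_of_ne_invLetter (h : d ≠ c) (h' : d ≠ invLetter c) : d.1 ≠ c.1 := by
  revert c d
  decide

theorem eq_alternateLetter_of_axis_ne_of_sign_ne (h : d.1 ≠ c.1) (h' : d.2 ≠ c.2) :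
    d = alternateLetter c :=
  Prod.ext (Bool.eq_not.2 h) (Bool.eq_not.2 h')

theorem exists_letter_eq_of_mem_gens {p : F2} (hp : p ∈ gens) : ∃ c, letter c = p := by
  rcases hp with rfl | rfl | rfl | rfl
  exacts [⟨(true, true), rfl⟩, ⟨(false, true), rfl⟩, ⟨(true, false), rfl⟩, ⟨(false, false), rfl⟩]

theorem letterSign_sq (c : Bool × Bool) : letterSign c ^ 2 = 1 := by
  rcases c with ⟨_, _ | _⟩ <;> simp [letterSign]

theorem rho_gh (l : ℝ) : rho l gh = hmat l := FreeGroup.lift_apply_of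

theorem rho_gv (l : ℝ) : rho l gv = vmat l := FreeGroup.lift_apply_of

theorem coe_rho_letter (l : ℝ) (c : Bool × Bool) : (rho l (letter c)).val =
    if c.1 then !![1, letterSign c * l; 0, 1] else !![1, 0; letterSign c * l, 1] := by
  rcases c with ⟨_ | _, _ | _⟩
  · change (rho l gv⁻¹).val = _
    rw [map_inv, rho_gv, Matrix.SpecialLinearGroup.coe_inv]
    simp [vmat, letterSign, Matrix.adjugate_fin_two]
  · change (rho l gv).val = _
    simp [rho_gv, vmat, letterSign]
  · change (rho l gh⁻¹).val = _
    rw [map_inv, rho_gh, Matrix.SpecialLinearGroup.coe_inv]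
    simp [hmat, letterSign, Matrix.adjugate_fin_two]
  · change (rho l gh).val = _
    simp [rho_gh, hmat, letterSign]

theorem act_letter (l : ℝ) (c : Bool × Bool) (x : Fin 2 → ℝ) :
    act l (letter c) x = if c.1 then ![x 0 + letterSign c * l * x 1, x 1]
      else ![x 0, x 1 + letterSign c * l * x 0] := by
  rw [act, coe_rho_letter]
  split_ifs <;> ext i <;> fin_cases i <;> simp [Matrix.mulVec, dotProduct, add_comm]

theorem act_letter_of_fixedCoord_eq_zero (l : ℝ) (hx : x (fixedCoord c) = 0) :
    act l (letter c) x = x := by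
  rw [act_letter]
  rcases c with ⟨_ | _, s⟩ <;> simp only [fixedCoord] at hx <;> ext i <;> fin_cases i <;>
    simp_all

theorem exists_ne_zero_fixedCoord_eq_zero (c : Bool × Bool) :
    ∃ x : Fin 2 → ℝ, x ≠ 0 ∧ x (fixedCoord c) = 0 := by
  refine ⟨Pi.single (fixedCoord (alternateLetter c)) 1, by simp, Pi.single_eq_of_ne ?_ _⟩
  rcases c with ⟨_ | _, _⟩ <;> simp [fixedCoord, alternateLetter]

theorem continuous_coneForm (c : Bool × Bool) : Continuous (coneForm c) := by
  unfold coneForm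
  fun_prop

theorem coneForm_smul (c : Bool × Bool) (r : ℝ) (x : Fin 2 → ℝ) :
    coneForm c (r • x) = r ^ 2 * coneForm c x := by
  simp only [coneForm, Pi.smul_apply, smul_eq_mul]
  ring

theorem coneForm_eq_zero_of_fixedCoord_eq_zero (hx : x (fixedCoord c) = 0) :
    coneForm c x = 0 := by
  have hprod : x 0 * x 1 = 0 := by
    rcases c with ⟨_ | _, _⟩ <;> simp_all [fixedCoord]
  simp [coneForm, hx, hprod]

theorem coneForm_invLetter (c : Bool × Bool) (x : Fin 2 → ℝ) :
    coneForm (invLetter c) x = 2 * x (fixedCoord c) ^ 2 - coneForm c x := by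
  rcases c with ⟨_ | _, _ | _⟩ <;> simp [coneForm, invLetter, letterSign, fixedCoord] <;> ring

theorem nrm_sq_eq_of_axis_ne (h : d.1 ≠ c.1) (x : Fin 2 → ℝ) :
    nrm x ^ 2 = x (fixedCoord c) ^ 2 + x (fixedCoord d) ^ 2 := by
  rw [nrm_sq]
  rcases c with ⟨_ | _, _⟩ <;> rcases d with ⟨_ | _, _⟩ <;> simp_all [fixedCoord, add_comm]

theorem nrm_sq_add_two_mul_sign_nonneg (c : Bool × Bool) (x : Fin 2 → ℝ) :
    0 ≤ nrm x ^ 2 + 2 * (letterSign c * (x 0 * x 1)) := by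
  rw [nrm_sq]
  linear_combination sq_nonneg (x 0 + letterSign c * x 1) + x 1 ^ 2 * letterSign_sq c

theorem coneForm_add_coneForm_alternateLetter (c : Bool × Bool) (x : Fin 2 → ℝ) :
    coneForm c x + coneForm (alternateLetter c) x = nrm x ^ 2 := by
  have hsign : letterSign (alternateLetter c) = -letterSign c := by
    rcases c with ⟨_, _ | _⟩ <;> simp [letterSign, alternateLetter]
  rw [nrm_sq_eq_of_axis_ne (d := alternateLetter c) (Bool.not_ne_self c.1), coneForm, coneForm,
    hsign]
  ring

theorem coneForm_add_nonneg (h : d ≠ c) (x : Fin 2 → ℝ) : 0 ≤ coneForm c x + coneForm d x := by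
  by_cases hinv : d = invLetter c
  · rw [hinv, coneForm_invLetter, add_sub_cancel]
    positivity
  have haxis := axis_ne_of_ne_of_ne_invLetter h hinv
  by_cases hsign : d.2 = c.2
  · have hsum : coneForm c x + coneForm d x = nrm x ^ 2 + 2 * (letterSign c * (x 0 * x 1)) := by
      rw [nrm_sq_eq_of_axis_ne haxis, coneForm, coneForm, letterSign, letterSign, hsign]
      ring
    exact hsum ▸ nrm_sq_add_two_mul_sign_nonneg c x
  · rw [eq_alternateLetter_of_axis_ne_of_sign_ne haxis hsign,
      coneForm_add_coneForm_alternateLetter]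
    positivity

theorem coneForm_nonneg_of_nonpos (h : d ≠ c) (hy : coneForm d y ≤ 0) : 0 ≤ coneForm c y := by
  linarith [coneForm_add_nonneg h y]

theorem nrm_sq_le_two_mul_fixedCoord_sq (h : d.1 ≠ c.1) (hy : coneForm d y ≤ 0) :
    nrm y ^ 2 ≤ 2 * y (fixedCoord c) ^ 2 := by
  have hcone : y (fixedCoord d) ^ 2 + letterSign d * (y 0 * y 1) ≤ 0 := hy
  linarith [nrm_sq_eq_of_axis_ne h y, nrm_sq_add_two_mul_sign_nonneg d y]

/-! ### The effect of a letter on the cones and on the norm -/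

theorem act_letter_fixedCoord (l : ℝ) (c : Bool × Bool) (x : Fin 2 → ℝ) :
    act l (letter c) x (fixedCoord c) = x (fixedCoord c) := by
  rw [act_letter]
  rcases c with ⟨_ | _, _⟩ <;> simp [fixedCoord]

theorem coneForm_act_letter (l : ℝ) (c : Bool × Bool) (x : Fin 2 → ℝ) :
    coneForm c (act l (letter c) x) = coneForm c x + l * x (fixedCoord c) ^ 2 := by
  rw [act_letter]
  rcases c with ⟨_ | _, _ | _⟩ <;> simp [coneForm, letterSign, fixedCoord] <;> ring

theorem nrm_act_letter_sq (l : ℝ) (c : Bool × Bool) (x : Fin 2 → ℝ) :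
    nrm (act l (letter c) x) ^ 2 =
      nrm x ^ 2 + 2 * l * coneForm c x + l * (l - 2) * x (fixedCoord c) ^ 2 := by
  rw [nrm_sq, nrm_sq, act_letter]
  rcases c with ⟨_ | _, _ | _⟩ <;> simp [coneForm, letterSign, fixedCoord] <;> ring

theorem coneForm_invLetter_act_letter_nonpos (hl : 2 ≤ l) (h : d ≠ c) (hy : coneForm d y ≤ 0) :
    coneForm (invLetter c) (act l (letter c) y) ≤ 0 := by
  rw [coneForm_invLetter, coneForm_act_letter, act_letter_fixedCoord]
  nlinarith [coneForm_nonneg_of_nonpos h hy, sq_nonneg (y (fixedCoord c))]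

theorem nrm_sq_add_mul_coneForm_le (hl : 2 ≤ l) (c : Bool × Bool) (x : Fin 2 → ℝ) :
    nrm x ^ 2 + 2 * l * coneForm c x ≤ nrm (act l (letter c) x) ^ 2 := by
  have hmul : 0 ≤ l * (l - 2) := mul_nonneg (by linarith) (sub_nonneg.2 hl)
  rw [nrm_act_letter_sq]
  exact le_add_of_nonneg_right (mul_nonneg hmul (sq_nonneg _))

theorem nrm_sq_le_nrm_act_letter_sq (hl : 2 ≤ l) (h : d ≠ c) (hy : coneForm d y ≤ 0) :
    nrm y ^ 2 ≤ nrm (act l (letter c) y) ^ 2 := by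
  have hc : 0 ≤ 2 * l * coneForm c y :=
    mul_nonneg (by linarith) (coneForm_nonneg_of_nonpos h hy)
  linarith [nrm_sq_add_mul_coneForm_le hl c y]

theorem mul_nrm_sq_le_nrm_act_letter_sq (hl : 2 ≤ l) (h : d.1 ≠ c.1) (hy : coneForm d y ≤ 0) :
    (1 + l * (l - 2) / 2) * nrm y ^ 2 ≤ nrm (act l (letter c) y) ^ 2 := by
  have hc := coneForm_nonneg_of_nonpos (ne_of_apply_ne Prod.fst h) hy
  have hmul : 0 ≤ l * (l - 2) := mul_nonneg (by linarith) (sub_nonneg.2 hl)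
  have hfixed := mul_le_mul_of_nonneg_left (nrm_sq_le_two_mul_fixedCoord_sq h hy) hmul
  have : 0 ≤ 2 * l * coneForm c y := by positivity
  rw [nrm_act_letter_sq]
  linarith

theorem mul_nrm_sq_le_nrm_act_letter_sq_of_alternate (hl : 2 ≤ l)
    (hy : coneForm (alternateLetter c) y ≤ 0) :
    (1 + 2 * l) * nrm y ^ 2 ≤ nrm (act l (letter c) y) ^ 2 := by
  have hc : nrm y ^ 2 ≤ coneForm c y := by
    linarith [coneForm_add_coneForm_alternateLetter c y]
  have hscaled : 2 * l * nrm y ^ 2 ≤ 2 * l * coneForm c y :=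
    mul_le_mul_of_nonneg_left hc (by linarith)
  linarith [nrm_sq_add_mul_coneForm_le hl c y]

theorem mul_nrm_sq_le_nrm_act_letter_act_letter_sq (hl : 1 ≤ l) (h : d.1 ≠ c.1)
    (hy : coneForm d y ≤ 0) :
    (1 + 2 * l * (l - 1)) * nrm y ^ 2 ≤ nrm (act l (letter c) (act l (letter c) y)) ^ 2 := by
  have hc := coneForm_nonneg_of_nonpos (ne_of_apply_ne Prod.fst h) hy
  have hmul : 0 ≤ 2 * l * (l - 1) := mul_nonneg (by linarith) (sub_nonneg.2 hl)
  have hfixed := mul_le_mul_of_nonneg_left (nrm_sq_le_two_mul_fixedCoord_sq h hy) hmul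
  have : 0 ≤ 4 * l * coneForm c y := by positivity
  rw [nrm_act_letter_sq, nrm_act_letter_sq, coneForm_act_letter, act_letter_fixedCoord]
  linarith

/-! ### Geodesic rays and their letters -/

/-- The sequence `a` of letters spells the geodesic ray `g` by successive left multiplication, and
it is reduced. -/
structure IsSpelling (g : ℕ → F2) (a : ℕ → Bool × Bool) : Prop where
  zero : g 0 = 1
  succ (n : ℕ) : g (n + 1) = letter (a n) * g n
  ne_invLetter (n : ℕ) : a (n + 1) ≠ invLetter (a n)

theorem IsGeodesicRay.exists_isSpelling (hg : IsGeodesicRay g) : ∃ a, IsSpelling g a := by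
  obtain ⟨hzero, hstep, hreduced⟩ := hg
  choose a ha using fun n => exists_letter_eq_of_mem_gens (hstep n)
  have hsucc (n : ℕ) : g (n + 1) = letter (a n) * g n := by simp [ha]
  refine ⟨a, hzero, hsucc, fun n hn => hreduced n ?_⟩
  rw [hsucc (n + 1), hsucc n, hn, letter_invLetter]
  group

theorem iterate_shiftRay (hg : g 0 = 1) (m k : ℕ) :
    shiftRay^[m] g k = g (m + k) * (g m)⁻¹ := by
  induction m generalizing k with
  | zero => simp [hg]
  | succ m ih =>
    simp only [Function.iterate_succ_apply', shiftRay, ih, add_assoc, add_comm 1 k]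
    group

theorem tailEquiv_of_increments_eq {s : ℕ → F2} (hg : g 0 = 1) (hs : s 0 = 1) (m : ℕ)
    (h : ∀ k, g (m + (k + 1)) * (g (m + k))⁻¹ = s (k + 1) * (s k)⁻¹) : TailEquiv g s := by
  refine ⟨m, 0, funext fun k => ?_⟩
  rw [iterate_shiftRay hg, Function.iterate_zero_apply]
  induction k with
  | zero => simp [hs]
  | succ k ih =>
    rw [← inv_mul_cancel_right (g (m + (k + 1))) (g (m + k)), h, mul_assoc, ih]
    group

theorem seqPow_zero (p : F2) : seqPow p 0 = 1 := pow_zero p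

theorem seqPow_succ (p : F2) (n : ℕ) : seqPow p (n + 1) = p * seqPow p n := pow_succ' p n

theorem seqPer_zero (p q : F2) : seqPer p q 0 = 1 := by
  simp [seqPer]

theorem seqPer_succ (p q : F2) (n : ℕ) :
    seqPer p q (n + 1) = (if Even n then p else q) * seqPer p q n := by
  rcases n.even_or_odd' with ⟨k, rfl | rfl⟩
  · simp [seqPer, Nat.mul_add_div]
  · have hdiv : (2 * k + 1 + 1) / 2 = k + 1 := by omega
    have hmod : (2 * k + 1 + 1) % 2 = 0 := by omega
    simp [seqPer, Nat.mul_add_div, hdiv, hmod, pow_succ', mul_assoc]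

theorem seqPer_letter_alternateLetter_succ (c : Bool × Bool) (n : ℕ) :
    seqPer (letter c) (letter (alternateLetter c)) (n + 1) =
      letter (alternateLetter^[n] c) * seqPer (letter c) (letter (alternateLetter c)) n := by
  rw [seqPer_succ]
  split_ifs with hn
  · rw [involutive_alternateLetter.iterate_even hn, id]
  · rw [involutive_alternateLetter.iterate_odd (Nat.not_even_iff_odd.1 hn)]

theorem IsSpelling.exists_tailEquiv_seqPow (h : IsSpelling g a) (ha : EventuallyConst a atTop) :
    ∃ c, TailEquiv g (seqPow (letter c)) := by
  obtain ⟨m, hm⟩ := eventuallyConst_atTop.1 ha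
  refine ⟨a m, tailEquiv_of_increments_eq h.zero (seqPow_zero _) m fun k => ?_⟩
  rw [← add_assoc, h.succ, hm _ (Nat.le_add_right m k), seqPow_succ]
  group

theorem IsSpelling.exists_tailEquiv_seqPer (h : IsSpelling g a)
    (halt : ∀ᶠ n in atTop, a (n + 1) = alternateLetter (a n)) :
    ∃ s, TailEquiv g (seqPer (letter (true, s)) (letter (alternateLetter (true, s)))) := by
  obtain ⟨m, hm⟩ := eventually_atTop.1 halt
  obtain ⟨n, hn, haxis⟩ : ∃ n, m ≤ n ∧ (a n).1 = true := by
    cases haxis : (a m).1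
    · exact ⟨m + 1, m.le_succ, by simp [hm m le_rfl, alternateLetter, haxis]⟩
    · exact ⟨m, le_rfl, haxis⟩
  have hiterate (k : ℕ) : a (n + k) = alternateLetter^[k] (a n) := by
    induction k with
    | zero => rfl
    | succ k ih => rw [← add_assoc, hm _ (by omega), ih, Function.iterate_succ_apply']
  refine ⟨(a n).2, ?_⟩
  rw [show (true, (a n).2) = a n from Prod.ext haxis.symm rfl]
  refine tailEquiv_of_increments_eq h.zero (seqPer_zero _ _) n fun k => ?_
  rw [← add_assoc, h.succ, hiterate, seqPer_letter_alternateLetter_succ]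
  group

theorem cond1_iff : Cond1 g ↔ ∀ c, ¬ TailEquiv g (seqPow (letter c)) := by
  simp only [Prod.forall, Bool.forall_bool]
  exact ⟨fun ⟨h, hi, v, vi⟩ => ⟨⟨vi, v⟩, hi, h⟩, fun ⟨⟨vi, v⟩, hi, h⟩ => ⟨h, hi, v, vi⟩⟩

theorem cond2_iff : Cond2 g ↔
    ∀ s, ¬ TailEquiv g (seqPer (letter (true, s)) (letter (alternateLetter (true, s)))) := by
  rw [Bool.forall_bool]
  exact and_comm

/-! ### Rays along which nothing shrinks -/

theorem not_isShrinkingSeq_of_tendsto {r : ℝ} (hr : 0 < r)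
    (hy : Tendsto (fun n => nrm (act l (g n) y)) atTop (𝓝 r)) (hx : x ≠ 0) :
    ¬ IsShrinkingSeq l g x := by
  intro hshrink
  have hy0 : y ≠ 0 := by
    rintro rfl
    have hzero (n : ℕ) : nrm (act l (g n) 0) = 0 := by simp [act, nrm]
    simp only [hzero, tendsto_const_nhds_iff] at hy
    exact hr.ne hy
  have hpos (n : ℕ) : 0 < nrm (act l (g n) y) := nrm_pos_iff.2 (act_ne_zero l _ hy0)
  obtain ⟨B, hB⟩ := hy.bddAbove_range
  obtain ⟨B', hB'⟩ := (hy.inv₀ hr.ne').bddAbove_range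
  replace hB (n : ℕ) : nrm (act l (g n) y) ≤ B := hB ⟨n, rfl⟩
  replace hB' (n : ℕ) : (nrm (act l (g n) y))⁻¹ ≤ B' := hB' ⟨n, rfl⟩
  have hBpos : 0 < B := (hpos 0).trans_le (hB 0)
  have hB'pos : 0 < B' := (inv_pos.2 (hpos 0)).trans_le (hB' 0)
  have harea : area x y = 0 := by
    by_contra hne
    obtain ⟨i, hi⟩ := hshrink (|area x y| / B) (by positivity)
    have := calc
      |area x y| = |area (act l (g i) x) (act l (g i) y)| := by rw [area_act]
      _ ≤ nrm (act l (g i) x) * nrm (act l (g i) y) := abs_area_le _ _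
      _ ≤ nrm (act l (g i) x) * B := mul_le_mul_of_nonneg_left (hB i) (nrm_nonneg _)
    exact this.not_gt ((lt_div_iff₀ hBpos).1 hi)
  obtain ⟨t, rfl⟩ := exists_eq_smul_of_area_eq_zero hy0 harea
  have ht : t ≠ 0 := fun h => hx (by simp [h])
  obtain ⟨i, hi⟩ := hshrink (|t| / B') (by positivity)
  rw [act_smul, nrm_smul, div_eq_mul_inv, mul_lt_mul_iff_right₀ (abs_pos.2 ht)] at hi
  exact (inv_le_of_inv_le₀ (hpos i) (hB' i)).not_gt hi

theorem TailEquiv.not_isShrinkingSeq {s : ℕ → F2} (h : TailEquiv g s) (hg : g 0 = 1)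
    (hs : s 0 = 1) (hy : y ≠ 0) (hconst : ∀ n, nrm (act l (s n) y) = nrm y) (hx : x ≠ 0) :
    ¬ IsShrinkingSeq l g x := by
  obtain ⟨m, n, hmn⟩ := h
  have htail (k : ℕ) : g (k + m) = s (n + k) * ((s n)⁻¹ * g m) := by
    have := congrFun hmn k
    rw [iterate_shiftRay hg, iterate_shiftRay hs] at this
    rw [← mul_assoc, ← this, add_comm k]
    group
  have hnrm (k : ℕ) : nrm (act l (g (k + m)) (act l ((g m)⁻¹ * s n) y)) = nrm y := by
    rw [htail, ← act_mul, ← hconst (n + k)]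
    group
  refine not_isShrinkingSeq_of_tendsto (y := act l ((g m)⁻¹ * s n) y) (nrm_pos_iff.2 hy) ?_ hx
  rw [← tendsto_add_atTop_iff_nat m]
  simp only [hnrm, tendsto_const_nhds]

theorem act_seqPow_letter_of_fixedCoord_eq_zero (l : ℝ) (hx : x (fixedCoord c) = 0) (n : ℕ) :
    act l (seqPow (letter c) n) x = x := by
  induction n with
  | zero => rw [seqPow_zero, act_one]
  | succ n ih => rw [seqPow_succ, act_mul, ih, act_letter_of_fixedCoord_eq_zero l hx]

theorem cond1_of_isShrinkingSeq (hg : g 0 = 1) (hx : x ≠ 0) (h : IsShrinkingSeq l g x) :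
    Cond1 g := by
  refine cond1_iff.2 fun c ht => ?_
  obtain ⟨y, hy, hfixed⟩ := exists_ne_zero_fixedCoord_eq_zero c
  refine ht.not_isShrinkingSeq hg (seqPow_zero _) hy (fun n => ?_) hx h
  rw [act_seqPow_letter_of_fixedCoord_eq_zero l hfixed]

-- At `λ = 2` a letter of sign `σ` is an isometry between the diagonals `x 0 = ∓σ * x 1`.
theorem act_two_letter_of_add_sign_mul_eq_zero (hx : x 0 + letterSign c * x 1 = 0) :
    nrm (act 2 (letter c) x) = nrm x ∧
      act 2 (letter c) x 0 + letterSign (alternateLetter c) * act 2 (letter c) x 1 = 0 := by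
  have hx0 : x 0 = -(letterSign c * x 1) := eq_neg_of_add_eq_zero_left hx
  rw [← sq_eq_sq₀ (nrm_nonneg _) (nrm_nonneg _), nrm_sq, nrm_sq, act_letter]
  rcases c with ⟨_ | _, _ | _⟩ <;> simp_all [letterSign, alternateLetter] <;>
    constructor <;> ring

theorem nrm_act_two_seqPer_of_add_sign_mul_eq_zero (hx : x 0 + letterSign c * x 1 = 0) (n : ℕ) :
    nrm (act 2 (seqPer (letter c) (letter (alternateLetter c)) n) x) = nrm x := by
  set s := seqPer (letter c) (letter (alternateLetter c))
  suffices h : nrm (act 2 (s n) x) = nrm x ∧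
      act 2 (s n) x 0 + letterSign (alternateLetter^[n] c) * act 2 (s n) x 1 = 0 from h.1
  induction n with
  | zero => simpa [s, seqPer_zero, act_one] using hx
  | succ n ih =>
    have hstep := act_two_letter_of_add_sign_mul_eq_zero ih.2
    rw [← act_mul, ← seqPer_letter_alternateLetter_succ,
      ← Function.iterate_succ_apply' alternateLetter] at hstep
    exact ⟨hstep.1.trans ih.1, hstep.2⟩

theorem cond2_of_isShrinkingSeq_two (hg : g 0 = 1) (hx : x ≠ 0) (h : IsShrinkingSeq 2 g x) :
    Cond2 g := by
  refine cond2_iff.2 fun s ht => ?_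
  have hdiag : ![-letterSign (true, s), 1] 0 + letterSign (true, s) *
      ![-letterSign (true, s), 1] 1 = 0 := by simp
  exact ht.not_isShrinkingSeq hg (seqPer_zero _ _) (by simp)
    (nrm_act_two_seqPer_of_add_sign_mul_eq_zero hdiag) hx h

/-! ### Shrinking directions -/

theorem tendsto_zero_of_frequently_mul_le {f : ℕ → ℝ} {K : ℝ} (p : ℕ) (hf : Antitone f)
    (hnonneg : ∀ n, 0 ≤ f n) (hK : 1 < K) (h : ∃ᶠ n in atTop, K * f (n + p) ≤ f n) :
    Tendsto f atTop (𝓝 0) := by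
  have hlim := tendsto_atTop_ciInf hf ⟨0, Set.forall_mem_range.2 hnonneg⟩
  set L := ⨅ n, f n
  have hL : 0 ≤ L := le_ciInf hnonneg
  have hdiff : Tendsto (fun n => K * f (n + p) - f n) atTop (𝓝 (K * L - L)) :=
    ((hlim.comp (tendsto_add_atTop_nat p)).const_mul K).sub hlim
  have hle : K * L - L ≤ 0 :=
    le_of_tendsto_of_frequently hdiff (h.mono fun n hn => sub_nonpos.2 hn)
  have hL0 : L = 0 := by nlinarith
  exact hL0 ▸ hlim

namespace IsSpelling

theorem act_eq_act_letter_act_succ (h : IsSpelling g a) (l : ℝ) (n : ℕ) (x : Fin 2 → ℝ) :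
    act l (g n) x = act l (letter (invLetter (a n))) (act l (g (n + 1)) x) := by
  rw [← act_mul, h.succ, letter_invLetter, inv_mul_cancel_left]

theorem coneForm_act_nonpos_of_succ (h : IsSpelling g a) (hl : 2 ≤ l) {n : ℕ}
    (hx : coneForm (a (n + 1)) (act l (g (n + 1)) x) ≤ 0) :
    coneForm (a n) (act l (g n) x) ≤ 0 := by
  have hstep := coneForm_invLetter_act_letter_nonpos hl (h.ne_invLetter n) hx
  rwa [← h.act_eq_act_letter_act_succ, invLetter_invLetter] at hstep

theorem exists_mem_circ_forall_coneForm_act_nonpos (h : IsSpelling g a) (hl : 2 ≤ l) :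
    ∃ x ∈ Circ, ∀ n, coneForm (a n) (act l (g n) x) ≤ 0 := by
  let K (n : ℕ) : Set (Fin 2 → ℝ) := Circ ∩ {x | coneForm (a n) (act l (g n) x) ≤ 0}
  have hclosed (n : ℕ) : IsClosed (K n) := isCompact_circ.isClosed.inter <|
    isClosed_le ((continuous_coneForm _).comp (continuous_act _ _)) continuous_const
  have hnested (n : ℕ) : K (n + 1) ⊆ K n := fun x hx =>
    ⟨hx.1, h.coneForm_act_nonpos_of_succ hl hx.2⟩
  have hnonempty (n : ℕ) : (K n).Nonempty := by
    obtain ⟨y, hy, hfixed⟩ := exists_ne_zero_fixedCoord_eq_zero (a n)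
    refine ⟨_, inv_nrm_smul_mem_circ (act_ne_zero l (g n)⁻¹ hy), ?_⟩
    rw [Set.mem_ofPred_eq, act_smul, coneForm_smul, ← act_mul, mul_inv_cancel, act_one,
      coneForm_eq_zero_of_fixedCoord_eq_zero hfixed, mul_zero]
  obtain ⟨x, hx⟩ := IsCompact.nonempty_iInter_of_sequence_nonempty_isCompact_isClosed K
    hnested hnonempty (isCompact_circ.of_isClosed_subset (hclosed 0) Set.inter_subset_left) hclosed
  rw [Set.mem_iInter] at hx
  exact ⟨x, (hx 0).1, fun n => (hx n).2⟩

theorem antitone_nrm_act_sq (h : IsSpelling g a) (hl : 2 ≤ l)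
    (hx : ∀ n, coneForm (a n) (act l (g n) x) ≤ 0) :
    Antitone fun n => nrm (act l (g n) x) ^ 2 := by
  refine antitone_nat_of_succ_le fun n => ?_
  rw [h.act_eq_act_letter_act_succ l n]
  exact nrm_sq_le_nrm_act_letter_sq hl (h.ne_invLetter n) (hx (n + 1))

theorem isShrinkingSeq_of_frequently (h : IsSpelling g a) (hl : 2 ≤ l)
    (hx : ∀ n, coneForm (a n) (act l (g n) x) ≤ 0) {K : ℝ} (hK : 1 < K) (p : ℕ)
    (hdrop : ∃ᶠ n in atTop, K * nrm (act l (g (n + p)) x) ^ 2 ≤ nrm (act l (g n) x) ^ 2) :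
    IsShrinkingSeq l g x := by
  intro ε hε
  have hlim := tendsto_zero_of_frequently_mul_le p (h.antitone_nrm_act_sq hl hx)
    (fun n => sq_nonneg _) hK hdrop
  obtain ⟨i, hi⟩ := (hlim.eventually_lt_const (pow_pos hε 2)).exists
  exact ⟨i, lt_of_pow_lt_pow_left₀ 2 hε.le hi⟩

theorem mul_nrm_sq_succ_le_of_axis_ne (h : IsSpelling g a) (hl : 2 ≤ l) {n : ℕ}
    (hx : coneForm (a (n + 1)) (act l (g (n + 1)) x) ≤ 0) (haxis : (a (n + 1)).1 ≠ (a n).1) :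
    (1 + l * (l - 2) / 2) * nrm (act l (g (n + 1)) x) ^ 2 ≤ nrm (act l (g n) x) ^ 2 := by
  rw [h.act_eq_act_letter_act_succ l n]
  exact mul_nrm_sq_le_nrm_act_letter_sq hl haxis hx

theorem mul_nrm_sq_succ_le_of_axis_ne_of_sign_eq (h : IsSpelling g a) (hl : 2 ≤ l) {n : ℕ}
    (hx : coneForm (a (n + 1)) (act l (g (n + 1)) x) ≤ 0) (haxis : (a (n + 1)).1 ≠ (a n).1)
    (hsign : (a (n + 1)).2 = (a n).2) :
    (1 + 2 * l) * nrm (act l (g (n + 1)) x) ^ 2 ≤ nrm (act l (g n) x) ^ 2 := by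
  have halt : a (n + 1) = alternateLetter (invLetter (a n)) :=
    eq_alternateLetter_of_axis_ne_of_sign_ne haxis (by simp [invLetter, hsign])
  rw [h.act_eq_act_letter_act_succ l n]
  exact mul_nrm_sq_le_nrm_act_letter_sq_of_alternate hl (halt ▸ hx)

theorem mul_nrm_sq_add_two_le_of_eq_of_axis_ne (h : IsSpelling g a) (hl : 1 ≤ l) {n : ℕ}
    (hx : coneForm (a (n + 2)) (act l (g (n + 2)) x) ≤ 0) (heq : a (n + 1) = a n)
    (haxis : (a (n + 2)).1 ≠ (a (n + 1)).1) :
    (1 + 2 * l * (l - 1)) * nrm (act l (g (n + 2)) x) ^ 2 ≤ nrm (act l (g n) x) ^ 2 := by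
  rw [h.act_eq_act_letter_act_succ l n, h.act_eq_act_letter_act_succ l (n + 1), ← heq]
  exact mul_nrm_sq_le_nrm_act_letter_act_letter_sq hl haxis hx

theorem exists_isShrinkingSeq_of_not_eventuallyConst (h : IsSpelling g a) (hl : 2 < l)
    (ha : ¬ EventuallyConst a atTop) : ∃ x ∈ Circ, IsShrinkingSeq l g x := by
  obtain ⟨x, hcirc, hx⟩ := h.exists_mem_circ_forall_coneForm_act_nonpos hl.le
  refine ⟨x, hcirc, h.isShrinkingSeq_of_frequently hl.le hx
    (K := 1 + l * (l - 2) / 2) (by nlinarith) 1 ?_⟩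
  have hchange : ∃ᶠ n in atTop, a (n + 1) ≠ a n := by
    contrapose! ha
    exact eventuallyConst_atTop_nat.2 (eventually_atTop.1 ha)
  exact hchange.mono fun n hn => h.mul_nrm_sq_succ_le_of_axis_ne hl.le (hx (n + 1))
    (axis_ne_of_ne_of_ne_invLetter hn (h.ne_invLetter n))

end IsSpelling

theorem eventuallyConst_or_eventually_succ_eq {α : Type*} {f : α → α} {u : ℕ → α}
    (hstep : ∀ᶠ n in atTop, u (n + 1) = u n ∨ u (n + 1) = f (u n))
    (hrepeat : ∀ᶠ n in atTop, u (n + 1) = u n → u (n + 2) = u (n + 1)) :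
    EventuallyConst u atTop ∨ ∀ᶠ n in atTop, u (n + 1) = f (u n) := by
  by_cases hfreq : ∃ᶠ n in atTop, u (n + 1) = u n
  · obtain ⟨m, hm⟩ := eventually_atTop.1 hrepeat
    obtain ⟨n, hmn, hn⟩ := frequently_atTop.1 hfreq m
    exact .inl (eventuallyConst_atTop_nat.2
      ⟨n, Nat.le_induction hn fun k hk => hm k (hmn.trans hk)⟩)
  · exact .inr (hstep.mp ((not_frequently.1 hfreq).mono fun n hne hor => hor.resolve_left hne))

theorem IsSpelling.exists_isShrinkingSeq_two (h : IsSpelling g a)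
    (hconst : ¬ EventuallyConst a atTop)
    (halt : ¬ ∀ᶠ n in atTop, a (n + 1) = alternateLetter (a n)) :
    ∃ x ∈ Circ, IsShrinkingSeq 2 g x := by
  obtain ⟨x, hcirc, hx⟩ := h.exists_mem_circ_forall_coneForm_act_nonpos le_rfl
  refine ⟨x, hcirc, h.isShrinkingSeq_of_frequently le_rfl hx (K := 5) (by norm_num) 2 ?_⟩
  by_contra hdrop
  rw [not_frequently] at hdrop
  have hstep : ∀ᶠ n in atTop, a (n + 1) = a n ∨ a (n + 1) = alternateLetter (a n) := by
    filter_upwards [hdrop] with n hn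
    refine or_iff_not_imp_left.2 fun hne => ?_
    have haxis := axis_ne_of_ne_of_ne_invLetter hne (h.ne_invLetter n)
    refine eq_alternateLetter_of_axis_ne_of_sign_ne haxis fun hsign => hn ?_
    have := h.mul_nrm_sq_succ_le_of_axis_ne_of_sign_eq le_rfl (hx (n + 1)) haxis hsign
    linarith [h.antitone_nrm_act_sq le_rfl hx (Nat.le_succ (n + 1))]
  have hrepeat : ∀ᶠ n in atTop, a (n + 1) = a n → a (n + 2) = a (n + 1) := by
    filter_upwards [hdrop] with n hn heq
    by_contra hne
    have haxis := axis_ne_of_ne_of_ne_invLetter hne (h.ne_invLetter (n + 1))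
    have := h.mul_nrm_sq_add_two_le_of_eq_of_axis_ne one_le_two (hx (n + 2)) heq haxis
    exact hn (by linarith)
  exact (eventuallyConst_or_eventually_succ_eq hstep hrepeat).elim hconst halt

theorem IsSpelling.not_eventuallyConst (h : IsSpelling g a) (hg : Cond1 g) :
    ¬ EventuallyConst a atTop := fun ha =>
  let ⟨c, hc⟩ := h.exists_tailEquiv_seqPow ha
  cond1_iff.1 hg c hc

theorem IsSpelling.not_eventually_succ_eq_alternateLetter (h : IsSpelling g a) (hg : Cond2 g) :
    ¬ ∀ᶠ n in atTop, a (n + 1) = alternateLetter (a n) := fun ha =>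
  let ⟨s, hs⟩ := h.exists_tailEquiv_seqPer ha
  cond2_iff.1 hg s hs

theorem stmt7 :
    (∀ l : ℝ, 2 < l → ∀ g : ℕ → F2, IsGeodesicRay g →
      ((∃ x ∈ Circ, IsShrinkingSeq l g x) ↔ Cond1 g)) ∧
    (∀ g : ℕ → F2, IsGeodesicRay g →
      ((∃ x ∈ Circ, IsShrinkingSeq 2 g x) ↔ Cond1 g ∧ Cond2 g)) := by
  refine ⟨fun l hl g hg => ?_, fun g hg => ?_⟩ <;>
    obtain ⟨a, ha⟩ := hg.exists_isSpelling <;> constructor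
  · rintro ⟨x, hcirc, hx⟩
    exact cond1_of_isShrinkingSeq hg.1 (ne_zero_of_mem_circ hcirc) hx
  · intro hcond1
    exact ha.exists_isShrinkingSeq_of_not_eventuallyConst hl (ha.not_eventuallyConst hcond1)
  · rintro ⟨x, hcirc, hx⟩
    have hx0 := ne_zero_of_mem_circ hcirc
    exact ⟨cond1_of_isShrinkingSeq hg.1 hx0 hx, cond2_of_isShrinkingSeq_two hg.1 hx0 hx⟩
  · rintro ⟨hcond1, hcond2⟩
    exact ha.exists_isShrinkingSeq_two (ha.not_eventuallyConst hcond1)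
      (ha.not_eventually_succ_eq_alternateLetter hcond2)
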